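/- arXiv:1801.08778 — 2 statements merged into one kernel-verified Lean document; each statement's English description precedes it below -/
import Mathlib

section
/- Let α ≥ 1 be a real number. Then 0 < limsup_{L→∞} R(L)/L^α < ∞ holds if and only if 0 < limsup_{i→∞} (|p_{K(m_i) − 1}| + 1) / (|p_{m_i}| + 1)^α < ∞ holds (all quotients regarded as real numbers, and limsup taken along the atTop filter). -/
/-!
Write `P k = n 0 ⋯ n (k-1)`, so that `|p k| + 1 = P (k+1)`. The language consists of the factors
of the Toeplitz sequence that carries at `x ≥ 1` the letter `a j`, where `j` is the level of `x`,
i.e. the largest `j` with `P j ∣ x`. With `K = Kf a k`, the repetitivity function satisfies: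

* `R L ≤ 4 P K` whenever `L ≤ P (k+2) - P (k+1)`. A word of such a length that shows only `a (k+1)`
  at multiples of `P (k+1)` is a factor of `p (k+1)`. Any other word is determined by its place
  modulo `P (k+2)` and the letter at the only multiple of `P (k+2)` it meets. That letter occurs
  among `a (k+2), …, a K`, and every window of length `4 P K` has positions of all these levels
  well inside.
* `P K ≤ R (2 P (k+1) - 1)`. Since `a j ≠ a (j+1)`, the word `p k (a K) p k` occurs only at
  multiples of `P (k+1)`, and by minimality of `K` no such place in `p (K-1)` shows `a K`.

If `P (k+1) ≤ 2 L < P (k+2)`, the first estimate applies to `L`. Hence `R L / L ^ α` and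
`P (K k) / P (k+1) ^ α` bound each other up to constants along indices tending to infinity. Since
`Kf` is constant on `[m i, m (i+1))`, the indices `k = m i` give the largest quotients.
-/

open Filter

/-- The blocks `p k` of the simple Toeplitz subshift coded by `a` and `n`:
`p 0 = a 0 ^ (n 0 - 1)` and `p (k+1)` consists of `n (k+1)` copies of `p k`
separated by `n (k+1) - 1` single letters `a (k+1)`. -/
def ToeplitzBlock {A : Type*} (a : ℕ → A) (n : ℕ → ℕ) : ℕ → List A
  | 0 => List.replicate (n 0 - 1) (a 0)
  | k + 1 => List.intercalate [a (k + 1)] (List.replicate (n (k + 1)) (ToeplitzBlock a n k))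

/-- `lenPrev a n k = |p (k-1)|`, with the convention `|p (-1)| = 0`. -/
def lenPrev {A : Type*} (a : ℕ → A) (n : ℕ → ℕ) : ℕ → ℕ
  | 0 => 0
  | k + 1 => (ToeplitzBlock a n k).length

/-- The language of the simple Toeplitz subshift: all finite words occurring as a
factor of some block `p k`. -/
def ToeplitzLang {A : Type*} (a : ℕ → A) (n : ℕ → ℕ) : Set (List A) :=
  {u | ∃ k, u <:+: ToeplitzBlock a n k}

/-- The complexity function `C L`. -/
noncomputable def cmpl {A : Type*} (a : ℕ → A) (n : ℕ → ℕ) (L : ℕ) : ℕ :=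
  Set.ncard {u | u ∈ ToeplitzLang a n ∧ u.length = L}

/-- The palindrome complexity function `P L`. -/
noncomputable def palCmpl {A : Type*} (a : ℕ → A) (n : ℕ → ℕ) (L : ℕ) : ℕ :=
  Set.ncard {u | u ∈ ToeplitzLang a n ∧ u.length = L ∧ u.reverse = u}

/-- `Ak a k = {a j : j ≥ k}`. -/
def Ak {A : Type*} (a : ℕ → A) (k : ℕ) : Set A := {x | ∃ j, k ≤ j ∧ a j = x}

/-- The eventual alphabet `A_ev = ⋂ k, A_k`. -/
def Aev {A : Type*} (a : ℕ → A) : Set A := ⋂ k, Ak a k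

/-- `Kf a k = min {j > k : {a (k+1), …, a j} = A (k+1)}`. -/
noncomputable def Kf {A : Type*} (a : ℕ → A) (k : ℕ) : ℕ :=
  sInf {j | k < j ∧ {x | ∃ i, k + 1 ≤ i ∧ i ≤ j ∧ a i = x} = Ak a (k + 1)}

/-- The positions `m i` at which `Kf` increases: `m 0 = 0` and
`m (i+1) = min {j > m i : Kf j > Kf (m i)}`. -/
noncomputable def mseq {A : Type*} (a : ℕ → A) : ℕ → ℕ
  | 0 => 0
  | i + 1 => sInf {j | mseq a i < j ∧ Kf a (mseq a i) < Kf a j}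

/-- The repetitivity function `R L`: the least `L'` such that every word of
length `L` of the language is a factor of every word of length `L'`. -/
noncomputable def repet {A : Type*} (a : ℕ → A) (n : ℕ → ℕ) (L : ℕ) : ℕ :=
  sInf {L' | ∀ u ∈ ToeplitzLang a n, u.length = L →
    ∀ w ∈ ToeplitzLang a n, w.length = L' → u <:+: w}

namespace SimpleToeplitz

/-! ### Periods and levels -/

section Level

/-- The length `n 0 ⋯ n (k-1)` of `p (k-1)` together with one separating letter, so that
`|p k| + 1 = period n (k + 1)`. -/
def period (n : ℕ → ℕ) (k : ℕ) : ℕ := ∏ i ∈ Finset.range k, n i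

/-- The level of a position `x`: the largest `j` with `period n j ∣ x`, encoded as the least `j`
with `¬ period n (j + 1) ∣ x`. At `x = 0` it takes the junk value `0`. -/
noncomputable def level (n : ℕ → ℕ) (x : ℕ) : ℕ := sInf {j | ¬ period n (j + 1) ∣ x}

variable {n : ℕ → ℕ} {i j x y : ℕ}

lemma period_dvd_period (h : i ≤ j) : period n i ∣ period n j :=
  Finset.prod_dvd_prod_of_subset _ _ _ (Finset.range_subset_range.2 h)

lemma period_level_dvd (n : ℕ → ℕ) (x : ℕ) : period n (level n x) ∣ x := by
  rcases h : level n x with _ | j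
  · simp [period]
  · by_contra hx
    have : level n x ≤ j := Nat.sInf_le hx
    omega

lemma level_lt (h : ¬ period n j ∣ x) : level n x < j := by
  rcases j with _ | j
  · simp [period] at h
  · exact Nat.lt_succ_of_le (Nat.sInf_le h)

lemma level_eq (h : period n j ∣ x) (h' : ¬ period n (j + 1) ∣ x) : level n x = j := by
  refine le_antisymm (Nat.lt_succ_iff.1 (level_lt h')) (le_csInf ⟨j, h'⟩ fun i hi => ?_)
  by_contra! hij
  exact hi ((period_dvd_period hij).trans h)

lemma level_eq_of_lt (h : period n j ∣ x) (hx : 0 < x) (hxj : x < period n (j + 1)) :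
    level n x = j :=
  level_eq h (Nat.not_dvd_of_pos_of_lt hx hxj)

lemma level_congr (h : x ≡ y [MOD period n j]) (hx : ¬ period n j ∣ x) :
    level n x = level n y := by
  have hlt := level_lt hx
  have hnot : ¬ period n (level n x + 1) ∣ x :=
    Nat.sInf_mem (s := {j | ¬ period n (j + 1) ∣ x}) ⟨j, fun hd =>
      hx ((period_dvd_period j.le_succ).trans hd)⟩
  refine (level_eq ?_ fun hd => hnot ?_).symm
  · exact (h.dvd_iff (period_dvd_period hlt.le)).1 (period_level_dvd n x)
  · exact (h.dvd_iff (period_dvd_period hlt)).2 hd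

lemma level_add_of_dvd (hx : period n j ∣ x) (hy : ¬ period n j ∣ y) :
    level n (x + y) = level n y := by
  refine (level_congr (j := j) ?_ hy).symm
  simpa using ((Nat.modEq_zero_iff_dvd.2 hx).add_right y).symm

variable (hn : ∀ k, 2 ≤ n k)
include hn

lemma period_pos (k : ℕ) : 0 < period n k :=
  Finset.prod_pos fun i _ => two_pos.trans_le (hn i)

lemma two_mul_period_le (k : ℕ) : 2 * period n k ≤ period n (k + 1) := by
  rw [period, period, Finset.prod_range_succ, mul_comm]
  exact Nat.mul_le_mul_left _ (hn k)

lemma period_strictMono : StrictMono (period n) :=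
  strictMono_nat_of_lt_succ fun k => by
    have := two_mul_period_le hn k
    have := period_pos hn k
    omega

lemma lt_period (k : ℕ) : k < period n k := by
  simpa [period] using (period_strictMono hn).add_le_nat k 0

lemma level_period (j : ℕ) : level n (period n j) = j :=
  level_eq_of_lt dvd_rfl (period_pos hn j) (period_strictMono hn j.lt_succ_self)

lemma le_level (hx : 0 < x) (h : period n j ∣ x) : j ≤ level n x := by
  have hne : {i | ¬ period n (i + 1) ∣ x}.Nonempty :=
    ⟨x, Nat.not_dvd_of_pos_of_lt hx (x.lt_succ_self.trans (lt_period hn _))⟩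
  refine le_csInf hne fun i hi => ?_
  by_contra! hij
  exact hi ((period_dvd_period hij).trans h)

lemma level_eq_or_level_add_period_eq (h : period n j ∣ x) :
    level n x = j ∨ level n (x + period n j) = j := by
  by_cases hd : period n (j + 1) ∣ x
  · refine .inr (level_eq (dvd_add h dvd_rfl) ?_)
    rw [Nat.dvd_add_right hd]
    exact Nat.not_dvd_of_pos_of_lt (period_pos hn j) (period_strictMono hn j.lt_succ_self)
  · exact .inl (level_eq h hd)

end Level

/-! ### Windows of a sequence -/

section Window

variable {A : Type*} (f : ℕ → A)

/-- The factor of the sequence `f` at the positions `s + 1, …, s + L`. -/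
def window (s L : ℕ) : List A := (List.range' (s + 1) L).map f

@[simp]
lemma length_window (s L : ℕ) : (window f s L).length = L := by simp [window]

lemma window_one (s : ℕ) : window f s 1 = [f (s + 1)] := rfl

lemma window_add (s L L' : ℕ) :
    window f s (L + L') = window f s L ++ window f (s + L) L' := by
  rw [window, window, window, ← List.map_append, add_right_comm s L 1, List.range'_append_1]

variable {f}

lemma window_eq_window_iff {s t L : ℕ} :
    window f s L = window f t L ↔ ∀ i, 0 < i → i ≤ L → f (s + i) = f (t + i) := by
  refine List.ext_getElem_iff.trans ⟨fun ⟨_, h⟩ i h0 hi => ?_, fun h => ⟨by simp, fun i hi _ => ?_⟩⟩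
  · have := h (i - 1) (by simp; omega) (by simp; omega)
    simpa [window, add_assoc, Nat.add_sub_cancel' (show 1 ≤ i from h0)] using this
  · rw [length_window] at hi
    simpa [window, add_assoc, add_comm, add_left_comm] using h (i + 1) i.succ_pos hi

lemma window_infix_window {s L s' L' : ℕ} (h : s ≤ s') (h' : s' + L' ≤ s + L) :
    window f s' L' <:+: window f s L := by
  obtain ⟨d, rfl⟩ := Nat.exists_eq_add_of_le h
  obtain ⟨e, rfl⟩ : ∃ e, L = d + L' + e := ⟨L - (d + L'), by omega⟩
  rw [window_add, window_add]
  exact List.infix_append _ _ _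

lemma exists_eq_window_of_infix {s L : ℕ} {u : List A} (h : u <:+: window f s L) :
    ∃ t, s ≤ t ∧ t + u.length ≤ s + L ∧ u = window f t u.length := by
  obtain ⟨v, w, hvw⟩ := h
  obtain rfl : v.length + u.length + w.length = L := by
    simpa only [List.length_append, length_window] using congrArg List.length hvw
  rw [window_add, window_add] at hvw
  obtain ⟨hvu, -⟩ := List.append_inj hvw (by simp)
  exact ⟨s + v.length, by omega, by omega, (List.append_inj hvu (by simp)).2⟩

end Window

/-! ### The Toeplitz sequence and its language -/

section Sequence

variable {A : Type*} {a : ℕ → A} {n : ℕ → ℕ}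

/-- The one-sided Toeplitz sequence coded by `a` and `n`. Its positions start at `1`. -/
noncomputable def toeplitzSeq (a : ℕ → A) (n : ℕ → ℕ) (x : ℕ) : A := a (level n x)

/-- Away from the multiples of `period n j`, the Toeplitz sequence has period `period n j`. -/
lemma window_congr {j s t L : ℕ} (hst : s ≡ t [MOD period n j])
    (h : ∀ i, 0 < i → i ≤ L → period n j ∣ s + i →
      toeplitzSeq a n (s + i) = toeplitzSeq a n (t + i)) :
    window (toeplitzSeq a n) s L = window (toeplitzSeq a n) t L := by
  refine window_eq_window_iff.2 fun i h0 hi => ?_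
  by_cases hd : period n j ∣ s + i
  · exact h i h0 hi hd
  · exact congrArg a (level_congr (hst.add_right i) hd)

variable (hn : ∀ k, 2 ≤ n k)
include hn

lemma intercalate_eq_window {k : ℕ}
    (hk : ToeplitzBlock a n k = window (toeplitzSeq a n) 0 (period n (k + 1) - 1))
    (m : ℕ) (hm : m + 1 ≤ n (k + 1)) :
    [a (k + 1)].intercalate (List.replicate (m + 1) (ToeplitzBlock a n k)) =
      window (toeplitzSeq a n) 0 ((m + 1) * period n (k + 1) - 1) := by
  induction m with
  | zero => simpa using hk
  | succ m ih =>
    set P := period n (k + 1) with hP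
    have hPpos : 0 < P := period_pos hn _
    have hlevel {x : ℕ} (hd : P ∣ x) (hx : 0 < x) (hxm : x < (m + 2) * P) : level n x = k + 1 := by
      refine level_eq_of_lt hd hx (hxm.trans_le ?_)
      rw [period, Finset.prod_range_succ, mul_comm]
      exact Nat.mul_le_mul_left _ hm
    have hshift : window (toeplitzSeq a n) P ((m + 1) * P - 1) =
        window (toeplitzSeq a n) 0 ((m + 1) * P - 1) := by
      refine window_congr (j := k + 1) (Nat.modEq_zero_iff_dvd.2 dvd_rfl) fun i h0 hi hd => ?_
      have hmul : (m + 2) * P = (m + 1) * P + P := by ring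
      rw [zero_add, toeplitzSeq, toeplitzSeq, hlevel hd (by omega) (by omega),
        hlevel ((Nat.dvd_add_right dvd_rfl).1 hd) h0 (by omega)]
    have hletter : window (toeplitzSeq a n) (P - 1) 1 = [a (k + 1)] := by
      rw [window_one, Nat.sub_add_cancel hPpos, toeplitzSeq, hP, level_period hn]
    have hlen : (m + 1 + 1) * P - 1 = (P - 1) + 1 + ((m + 1) * P - 1) := by
      have : 0 < (m + 1) * P := by positivity
      rw [add_mul _ 1 P]
      omega
    rw [hlen, window_add, window_add, zero_add, zero_add, hletter, Nat.sub_add_cancel hPpos, hshift,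
      ← ih (by omega), ← hk, List.replicate_succ, List.intercalate_cons_of_ne_nil (by simp)]

lemma toeplitzBlock_eq_window (k : ℕ) :
    ToeplitzBlock a n k = window (toeplitzSeq a n) 0 (period n (k + 1) - 1) := by
  induction k with
  | zero =>
    refine (List.eq_replicate_iff.2 ⟨by simp [period], fun b hb => ?_⟩).symm
    obtain ⟨x, hx, rfl⟩ := List.mem_map.1 hb
    rw [List.mem_range'_1] at hx
    exact congrArg a (level_eq_of_lt (by simp [period]) (by omega) (by omega))
  | succ k ih =>
    obtain ⟨m, hm⟩ : ∃ m, n (k + 1) = m + 1 := Nat.exists_eq_add_one.2 (two_pos.trans_le (hn _))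
    rw [ToeplitzBlock, hm, intercalate_eq_window hn ih m hm.ge, ← hm, mul_comm,
      period, period, Finset.prod_range_succ _ (k + 1)]

lemma length_toeplitzBlock_add_one (a : ℕ → A) (k : ℕ) :
    (ToeplitzBlock a n k).length + 1 = period n (k + 1) := by
  rw [toeplitzBlock_eq_window hn, length_window, Nat.sub_add_cancel (period_pos hn _)]

lemma window_mem_toeplitzLang (s L : ℕ) : window (toeplitzSeq a n) s L ∈ ToeplitzLang a n := by
  refine ⟨s + L, ?_⟩
  have := lt_period hn (s + L + 1)
  rw [toeplitzBlock_eq_window hn]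
  exact window_infix_window s.zero_le (by omega)

lemma exists_eq_window_of_mem_toeplitzLang {u : List A} (hu : u ∈ ToeplitzLang a n) :
    ∃ s, u = window (toeplitzSeq a n) s u.length := by
  obtain ⟨k, hk⟩ := hu
  rw [toeplitzBlock_eq_window hn] at hk
  obtain ⟨s, -, -, hs⟩ := exists_eq_window_of_infix hk
  exact ⟨s, hs⟩

end Sequence

/-! ### The functions `Kf` and `mseq` -/

section Kf

variable {A : Type*} {a : ℕ → A}

lemma setOf_eq_Ak_iff {k j : ℕ} :
    {x | ∃ i, k + 1 ≤ i ∧ i ≤ j ∧ a i = x} = Ak a (k + 1) ↔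
      ∀ m, k < m → ∃ i, k < i ∧ i ≤ j ∧ a i = a m := by
  refine ⟨fun h m hm => h.ge ⟨m, hm, rfl⟩, fun h => Set.Subset.antisymm ?_ ?_⟩
  · rintro x ⟨i, hi, -, rfl⟩
    exact ⟨i, hi, rfl⟩
  · rintro x ⟨m, hm, rfl⟩
    exact h m hm

lemma Kf_le {k j : ℕ} (hj : k < j) (h : ∀ m, k < m → ∃ i, k < i ∧ i ≤ j ∧ a i = a m) :
    Kf a k ≤ j :=
  Nat.sInf_le ⟨hj, setOf_eq_Ak_iff.2 h⟩

variable [Finite A]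

lemma Kf_mem (a : ℕ → A) (k : ℕ) :
    Kf a k ∈ {j | k < j ∧ {x | ∃ i, k + 1 ≤ i ∧ i ≤ j ∧ a i = x} = Ak a (k + 1)} := by
  have hletter (x : A) : ∀ᶠ j in atTop, ∀ m, k < m → a m = x → ∃ i, k < i ∧ i ≤ j ∧ a i = x := by
    by_cases hx : ∃ m, k < m ∧ a m = x
    · obtain ⟨m, hm, hmx⟩ := hx
      filter_upwards [eventually_ge_atTop m] with j hj _ _ _ using ⟨m, hm, hj, hmx⟩
    · exact .of_forall fun j m hm hmx => absurd ⟨m, hm, hmx⟩ hx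
  obtain ⟨j, hkj, hj⟩ := ((eventually_gt_atTop k).and (eventually_all.2 hletter)).exists
  exact Nat.sInf_mem ⟨j, hkj, setOf_eq_Ak_iff.2 fun m hm => hj (a m) m hm rfl⟩

lemma lt_Kf (a : ℕ → A) (k : ℕ) : k < Kf a k := (Kf_mem a k).1

lemma exists_le_Kf_apply_eq (a : ℕ → A) {k m : ℕ} (hm : k < m) :
    ∃ i, k < i ∧ i ≤ Kf a k ∧ a i = a m :=
  setOf_eq_Ak_iff.1 (Kf_mem a k).2 m hm

lemma apply_ne_apply_Kf {k i : ℕ} (hki : k < i) (hi : i < Kf a k) : a i ≠ a (Kf a k) := by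
  intro hai
  have : Kf a k ≤ Kf a k - 1 := by
    refine Kf_le (by omega) fun m hm => ?_
    obtain ⟨j, hkj, hj, hjm⟩ := exists_le_Kf_apply_eq a hm
    rcases hj.lt_or_eq with h | rfl
    · exact ⟨j, hkj, by omega, hjm⟩
    · exact ⟨i, hki, by omega, hai.trans hjm⟩
  omega

lemma add_two_le_Kf (ha : ∀ k, a k ≠ a (k + 1)) (k : ℕ) : k + 2 ≤ Kf a k := by
  by_contra! hK
  obtain ⟨i, hki, hi, hai⟩ := exists_le_Kf_apply_eq a (show k < k + 2 by omega)
  obtain rfl : i = k + 1 := by omega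
  exact ha _ hai

lemma Kf_mono (a : ℕ → A) : Monotone (Kf a) := by
  refine monotone_nat_of_le_succ fun k => ?_
  have hK := lt_Kf a (k + 1)
  refine Kf_le (by omega) fun m hm => ?_
  rcases (Nat.succ_le_of_lt hm).lt_or_eq with h | rfl
  · obtain ⟨i, hki, hi, hai⟩ := exists_le_Kf_apply_eq a h
    exact ⟨i, by omega, hi, hai⟩
  · exact ⟨k + 1, hm, hK.le, rfl⟩

lemma mseq_succ_mem (a : ℕ → A) (i : ℕ) :
    mseq a (i + 1) ∈ {j | mseq a i < j ∧ Kf a (mseq a i) < Kf a j} :=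
  Nat.sInf_mem ⟨Kf a (mseq a i), lt_Kf a _, lt_Kf a _⟩

lemma mseq_strictMono (a : ℕ → A) : StrictMono (mseq a) :=
  strictMono_nat_of_lt_succ fun i => (mseq_succ_mem a i).1

lemma Kf_eq_Kf_mseq {i k : ℕ} (hik : mseq a i ≤ k) (hki : k < mseq a (i + 1)) :
    Kf a k = Kf a (mseq a i) := by
  refine le_antisymm ?_ (Kf_mono a hik)
  by_contra! hK
  have hne : mseq a i ≠ k := fun h => hK.ne (by rw [h])
  exact hki.not_ge (Nat.sInf_le ⟨hik.lt_of_ne hne, hK⟩)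

end Kf

/-! ### Two-sided estimate of the repetitivity function -/

section Repetitivity

variable {A : Type*} {a : ℕ → A} {n : ℕ → ℕ}

lemma period_dvd_of_forall_eq (hn : ∀ k, 2 ≤ n k) (ha : ∀ k, a k ≠ a (k + 1)) {k r s : ℕ}
    (hr : period n k ∣ r)
    (h : ∀ i, 0 < i → i < 2 * period n k → toeplitzSeq a n (r + i) = toeplitzSeq a n (s + i)) :
    period n k ∣ s := by
  induction k with
  | zero => simp [period]
  | succ k ih =>
    set P := period n (k + 1)
    have hlt : period n k < P := period_strictMono hn k.lt_succ_self
    have hkP : period n k ∣ P := period_dvd_period k.le_succ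
    have hks : period n k ∣ s := ih (hkP.trans hr) fun i h0 hi => h i h0 (by omega)
    by_contra hs
    have hmod : s % P < P := Nat.mod_lt s (by omega)
    have hmod_pos : 0 < s % P := Nat.pos_of_ne_zero fun hc => hs (Nat.dvd_of_mod_eq_zero hc)
    -- `r + e` and `r + e + P` carry the letter `a k`, but `s + e` or `s + e + P` has level `k + 1`
    obtain ⟨e, he, heP, hse⟩ : ∃ e, 0 < e ∧ e < P ∧ P ∣ s + e := by
      refine ⟨P - s % P, Nat.sub_pos_of_lt hmod, Nat.sub_lt (by omega) hmod_pos, s / P + 1, ?_⟩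
      have := Nat.div_add_mod s P
      rw [mul_add]
      omega
    have hke : period n k ∣ e := (Nat.dvd_add_right hks).1 (hkP.trans hse)
    have hle : level n e = k := level_eq_of_lt hke he heP
    have hne : ¬ P ∣ e := Nat.not_dvd_of_pos_of_lt he heP
    have hlevel : level n (r + e) = k := (level_add_of_dvd hr hne).trans hle
    have hlevel' : level n (r + P + e) = k := (level_add_of_dvd (dvd_add hr dvd_rfl) hne).trans hle
    have heq := h e he (by omega)
    have heq' := h (P + e) (by omega) (by omega)
    rw [← add_assoc, add_comm P e, ← add_assoc] at heq'
    simp only [toeplitzSeq, hlevel, hlevel'] at heq heq'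
    rcases level_eq_or_level_add_period_eq hn hse with hl | hl
    · exact ha k (heq.trans (congrArg a hl))
    · exact ha k (heq'.trans (congrArg a hl))

lemma window_eq_window_of_apply_eq {j x w d L : ℕ} (hL : L ≤ period n j) (hd : 0 < d) (hdL : d ≤ L)
    (hx : period n j ∣ x + d) (hw : period n j ∣ w + d)
    (h : toeplitzSeq a n (x + d) = toeplitzSeq a n (w + d)) :
    window (toeplitzSeq a n) x L = window (toeplitzSeq a n) w L := by
  rw [← Nat.modEq_zero_iff_dvd] at hx hw
  refine window_congr (Nat.ModEq.add_right_cancel' d (hx.trans hw.symm)) fun i h0 hi hxi => ?_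
  have hid : i ≡ d [MOD period n j] :=
    Nat.ModEq.add_left_cancel' x ((Nat.modEq_zero_iff_dvd.2 hxi).trans hx.symm)
  rwa [Nat.ModEq.eq_of_abs_lt hid (by rw [abs_lt]; omega)]

variable (hn : ∀ k, 2 ≤ n k)
include hn

lemma exists_level_eq_of_dvd {i K t : ℕ} (hi : i ≤ K) (ht : period n K ∣ t) :
    ∃ z, t ≤ z ∧ z ≤ t + period n K ∧ level n z = i := by
  have hle : period n i ≤ period n K := (period_strictMono hn).monotone hi
  rcases level_eq_or_level_add_period_eq hn ((period_dvd_period hi).trans ht) with h | h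
  · exact ⟨t, le_rfl, t.le_add_right _, h⟩
  · exact ⟨t + period n i, t.le_add_right _, by omega, h⟩

lemma window_eq_window_add_mod {k x t L : ℕ} (hL : L + period n k ≤ period n (k + 1))
    (ht : period n (k + 1) ∣ t)
    (h : ∀ i, 0 < i → i ≤ L → period n k ∣ x + i → toeplitzSeq a n (x + i) = a k) :
    window (toeplitzSeq a n) x L = window (toeplitzSeq a n) (t + x % period n k) L := by
  have hmod : x ≡ t + x % period n k [MOD period n k] := by
    have := (Nat.modEq_zero_iff_dvd.2 ((period_dvd_period k.le_succ).trans ht)).add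
      (Nat.mod_modEq x (period n k))
    simpa using this.symm
  refine window_congr hmod fun i h0 hi hd => ?_
  have hlt : x % period n k + i < period n (k + 1) := by
    have := Nat.mod_lt x (period_pos hn k)
    omega
  have hk : period n k ∣ t + (x % period n k + i) := by
    rw [← add_assoc]
    exact ((hmod.add_right i).dvd_iff dvd_rfl).1 hd
  rw [h i h0 hi hd, toeplitzSeq, add_assoc, level_eq hk]
  rw [Nat.dvd_add_right ht]
  exact Nat.not_dvd_of_pos_of_lt (by omega) hlt

variable [Finite A] (ha : ∀ k, a k ≠ a (k + 1))
include ha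

lemma window_infix_window_four_mul_period {k L : ℕ}
    (hL : L + period n (k + 1) ≤ period n (k + 2)) (x s : ℕ) :
    window (toeplitzSeq a n) x L <:+: window (toeplitzSeq a n) s (4 * period n (Kf a k)) := by
  have hK : k + 2 ≤ Kf a k := add_two_le_Kf ha k
  have hPK : period n (k + 2) ≤ period n (Kf a k) := (period_strictMono hn).monotone hK
  obtain ⟨t, hst, hts, ht⟩ : ∃ t, s + period n (Kf a k) < t ∧ t ≤ s + 2 * period n (Kf a k) ∧
      period n (Kf a k) ∣ t := by
    have hlt := Nat.lt_mul_div_succ s (period_pos hn (Kf a k))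
    have hle := Nat.mul_div_le s (period n (Kf a k))
    refine ⟨period n (Kf a k) * (s / period n (Kf a k) + 2), ?_, ?_, dvd_mul_right _ _⟩ <;>
      rw [mul_add] at * <;> omega
  by_cases h : ∀ i, 0 < i → i ≤ L → period n (k + 1) ∣ x + i → toeplitzSeq a n (x + i) = a (k + 1)
  · have := Nat.mod_lt x (period_pos hn (k + 1))
    rw [window_eq_window_add_mod hn hL ((period_dvd_period hK).trans ht) h]
    exact window_infix_window (by omega) (by omega)
  · push Not at h
    obtain ⟨d, hd, hdL, hdvd, hne⟩ := h
    have hdvd' : period n (k + 2) ∣ x + d := by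
      by_contra hc
      exact hne (congrArg a (level_eq hdvd hc))
    obtain ⟨i, hki, hiK, hi⟩ := exists_le_Kf_apply_eq a (le_level hn (by omega) hdvd)
    have hki' : k + 1 ≠ i := fun hc => hne (hc ▸ hi.symm)
    obtain ⟨z, htz, hzt, rfl⟩ := exists_level_eq_of_dvd hn hiK ht
    obtain ⟨w, rfl⟩ : ∃ w, z = w + d := ⟨z - d, by omega⟩
    have hw : period n (k + 2) ∣ w + d :=
      (period_dvd_period (lt_of_le_of_ne hki hki')).trans (period_level_dvd n _)
    rw [window_eq_window_of_apply_eq (by omega) hd hdL hdvd' hw hi.symm]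
    exact window_infix_window (by omega) (by omega)

lemma infix_of_length_eq_four_mul_period {k : ℕ} {u w : List A} (hu : u ∈ ToeplitzLang a n)
    (hk : u.length + period n (k + 1) ≤ period n (k + 2)) (hw : w ∈ ToeplitzLang a n)
    (hwk : w.length = 4 * period n (Kf a k)) : u <:+: w := by
  obtain ⟨x, hx⟩ := exists_eq_window_of_mem_toeplitzLang hn hu
  obtain ⟨s, hs⟩ := exists_eq_window_of_mem_toeplitzLang hn hw
  rw [hx, hs, hwk]
  exact window_infix_window_four_mul_period hn ha hk x s

lemma repet_le {k L : ℕ} (hL : L + period n (k + 1) ≤ period n (k + 2)) :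
    repet a n L ≤ 4 * period n (Kf a k) :=
  Nat.sInf_le fun _ hu hul _ hw hwk =>
    infix_of_length_eq_four_mul_period hn ha hu (hul ▸ hL) hw hwk

lemma window_infix_window_repet (x s L : ℕ) :
    window (toeplitzSeq a n) x L <:+: window (toeplitzSeq a n) s (repet a n L) := by
  have hL : L + period n (L + 1) ≤ period n (L + 2) := by
    have := lt_period hn (L + 1)
    have : 2 * period n (L + 1) ≤ period n (L + 2) := two_mul_period_le hn _
    omega
  have hmem : repet a n L ∈ {L' | ∀ u ∈ ToeplitzLang a n, u.length = L →
      ∀ w ∈ ToeplitzLang a n, w.length = L' → u <:+: w} :=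
    Nat.sInf_mem ⟨4 * period n (Kf a L), fun _ hu hul _ hw hwk =>
      infix_of_length_eq_four_mul_period hn ha hu (hul ▸ hL) hw hwk⟩
  exact hmem _ (window_mem_toeplitzLang hn x L) (length_window _ _ _)
    _ (window_mem_toeplitzLang hn s _) (length_window _ _ _)

lemma period_Kf_le_repet (k : ℕ) :
    period n (Kf a k) ≤ repet a n (2 * period n (k + 1) - 1) := by
  by_contra! hlt
  have hK : k + 2 ≤ Kf a k := add_two_le_Kf ha k
  have hP : 0 < period n (k + 1) := period_pos hn _
  have hPK : period n (k + 1) ≤ period n (Kf a k) := (period_strictMono hn).monotone (by omega)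
  have hdvd : period n (k + 1) ∣ period n (Kf a k) := period_dvd_period (by omega)
  -- the word `p k (a K) p k` around the position `period n K` would occur in `p (K-1)`
  obtain ⟨s, -, hs, heq⟩ := exists_eq_window_of_infix <| window_infix_window_repet hn ha
    (period n (Kf a k) - period n (k + 1)) 0 (2 * period n (k + 1) - 1)
  rw [length_window] at hs heq
  rw [window_eq_window_iff] at heq
  have hdvds : period n (k + 1) ∣ s :=
    period_dvd_of_forall_eq hn ha (Nat.dvd_sub hdvd dvd_rfl) fun i h0 hi => heq i h0 (by omega)
  have hletter := heq (period n (k + 1)) hP (by omega)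
  rw [Nat.sub_add_cancel hPK, toeplitzSeq, level_period hn] at hletter
  have hpos : 0 < s + period n (k + 1) := by omega
  exact apply_ne_apply_Kf (le_level hn hpos (dvd_add hdvds dvd_rfl))
    (level_lt (Nat.not_dvd_of_pos_of_lt hpos (by omega))) hletter.symm

end Repetitivity

/-! ### Comparison of upper limits -/

section TailDominated

variable {ι κ : Type*} {l : Filter ι} {l' : Filter κ} {F : ι → ℝ} {G : κ → ℝ}

/-- Along `l`, the function `F` is dominated, up to a constant, by values of `G` taken far out
along `l'`. This compares the upper limits of functions on different index sets. -/
def TailDominated (l : Filter ι) (F : ι → ℝ) (l' : Filter κ) (G : κ → ℝ) : Prop :=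
  ∃ C > 0, ∀ s ∈ l', ∀ᶠ x in l, ∃ y ∈ s, F x ≤ C * G y

lemma TailDominated.isBoundedUnder (h : TailDominated l F l' G)
    (hG : IsBoundedUnder (· ≤ ·) l' G) : IsBoundedUnder (· ≤ ·) l F := by
  obtain ⟨C, hC, h⟩ := h
  obtain ⟨b, hb⟩ := hG
  refine ⟨C * b, eventually_map.2 ?_⟩
  filter_upwards [h _ (eventually_map.1 hb)] with x ⟨y, hy, hxy⟩
  exact hxy.trans (mul_le_mul_of_nonneg_left hy hC.le)

lemma TailDominated.limsup_pos [l.NeBot] (h : TailDominated l F l' G) (hF : ∀ x, 0 ≤ F x)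
    (hG : IsBoundedUnder (· ≤ ·) l' G) (hpos : 0 < limsup F l) : 0 < limsup G l' := by
  obtain ⟨C, hC, h⟩ := h
  obtain ⟨c, hc, hcF⟩ := exists_between hpos
  have hfreq : ∃ᶠ x in l, c < F x :=
    frequently_lt_of_lt_limsup (isCoboundedUnder_le_of_le l hF) hcF
  refine (div_pos hc hC).trans_le (le_limsup_of_frequently_le (frequently_iff.2 fun hs => ?_) hG)
  obtain ⟨x, hcx, y, hy, hxy⟩ := (hfreq.and_eventually (h _ hs)).exists
  exact ⟨y, hy, (div_le_iff₀' hC).2 (hcx.le.trans hxy)⟩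

lemma TailDominated.isBoundedUnder_and_limsup_pos_iff [l.NeBot] [l'.NeBot]
    (h : TailDominated l F l' G) (h' : TailDominated l' G l F)
    (hF : ∀ x, 0 ≤ F x) (hG : ∀ y, 0 ≤ G y) :
    (IsBoundedUnder (· ≤ ·) l F ∧ 0 < limsup F l) ↔
      (IsBoundedUnder (· ≤ ·) l' G ∧ 0 < limsup G l') :=
  ⟨fun ⟨hb, hp⟩ => ⟨h'.isBoundedUnder hb, h.limsup_pos hF (h'.isBoundedUnder hb) hp⟩,
    fun ⟨hb, hp⟩ => ⟨h.isBoundedUnder hb, h'.limsup_pos hG (h.isBoundedUnder hb) hp⟩⟩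

end TailDominated

section Quotient

lemma exists_le_lt_succ_of_strictMono {f : ℕ → ℕ} (hf : StrictMono f) {m x : ℕ} (h : f m ≤ x) :
    ∃ k ≥ m, f k ≤ x ∧ x < f (k + 1) := by
  have hunbdd : ¬ BddAbove (f '' Set.Ici m) :=
    ((Set.Ici_infinite m).image hf.injective.injOn).not_bddAbove
  have hx := (biUnion_Ici_Ico_map_succ (fun k hk => hf.monotone hk) hunbdd).ge h
  obtain ⟨k, hk, hkx, hxk⟩ := Set.mem_iUnion₂.1 hx
  exact ⟨k, hk, hkx, hxk⟩

lemma div_rpow_le_mul_div_rpow {x y u v c d α : ℝ} (hα : 0 ≤ α) (hu : 0 < u) (hv : 0 < v)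
    (hd : 0 ≤ d) (hx : 0 ≤ x) (hxy : x ≤ c * y) (hvu : v ≤ d * u) :
    x / u ^ α ≤ c * d ^ α * (y / v ^ α) := by
  have hpow : v ^ α ≤ d ^ α * u ^ α := by
    rw [← Real.mul_rpow hd hu.le]
    exact Real.rpow_le_rpow hv.le hvu hα
  rw [← mul_div_assoc, div_le_div_iff₀ (by positivity) (by positivity)]
  calc x * v ^ α ≤ c * y * (d ^ α * u ^ α) := by gcongr; exact hx.trans hxy
    _ = c * d ^ α * y * u ^ α := by ring

variable {A : Type*} [Finite A] {a : ℕ → A} {n : ℕ → ℕ} (hn : ∀ k, 2 ≤ n k)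
  (ha : ∀ k, a k ≠ a (k + 1)) {α : ℝ} (hα : 0 ≤ α)
include hn ha

lemma exists_mseq_repet_le {i₀ L : ℕ} (hL : period n (mseq a i₀ + 1) ≤ 2 * L) :
    ∃ i ≥ i₀, period n (mseq a i + 1) ≤ 2 * L ∧
      repet a n L ≤ 4 * period n (Kf a (mseq a i)) := by
  obtain ⟨k, hk, hkL, hLk⟩ := exists_le_lt_succ_of_strictMono
    ((period_strictMono hn).comp (strictMono_id.add_const 1)) hL
  obtain ⟨i, hi, hik, hki⟩ := exists_le_lt_succ_of_strictMono (mseq_strictMono a) hk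
  refine ⟨i, hi, ((period_strictMono hn).monotone (Nat.succ_le_succ hik)).trans hkL, ?_⟩
  rw [← Kf_eq_Kf_mseq hik hki]
  have hLk' : 2 * L < period n (k + 2) := hLk
  have : 2 * period n (k + 1) ≤ period n (k + 2) := two_mul_period_le hn _
  exact repet_le hn ha (by omega)

include hα

lemma tailDominated_repet_period :
    TailDominated atTop (fun L : ℕ => (repet a n L : ℝ) / (L : ℝ) ^ α)
      atTop (fun i => (period n (Kf a (mseq a i)) : ℝ) / (period n (mseq a i + 1) : ℝ) ^ α) := by
  refine ⟨4 * 2 ^ α, by positivity, fun s hs => ?_⟩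
  obtain ⟨i₀, hi₀⟩ := mem_atTop_sets.1 hs
  filter_upwards [eventually_ge_atTop (period n (mseq a i₀ + 1))] with L hL
  have hpos := period_pos hn (mseq a i₀ + 1)
  obtain ⟨i, hi, hiL, hrepet⟩ := exists_mseq_repet_le (i₀ := i₀) (L := L) hn ha (by omega)
  exact ⟨i, hi₀ i hi, div_rpow_le_mul_div_rpow hα (by exact_mod_cast hpos.trans_le hL)
    (by exact_mod_cast period_pos hn _) zero_le_two (Nat.cast_nonneg _)
    (by exact_mod_cast hrepet) (by exact_mod_cast hiL)⟩

lemma tailDominated_period_repet :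
    TailDominated
      atTop (fun i => (period n (Kf a (mseq a i)) : ℝ) / (period n (mseq a i + 1) : ℝ) ^ α)
      atTop (fun L : ℕ => (repet a n L : ℝ) / (L : ℝ) ^ α) := by
  refine ⟨1 * 2 ^ α, by positivity, fun s hs => ?_⟩
  obtain ⟨L₀, hL₀⟩ := mem_atTop_sets.1 hs
  filter_upwards [eventually_ge_atTop L₀] with i hi
  have hpos := period_pos hn (mseq a i + 1)
  have hlt := lt_period hn (mseq a i + 1)
  have hle := (mseq_strictMono a).le_apply (x := i)
  have hrepet := period_Kf_le_repet hn ha (mseq a i)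
  refine ⟨2 * period n (mseq a i + 1) - 1, hL₀ _ (by omega), ?_⟩
  generalize hL : 2 * period n (mseq a i + 1) - 1 = L at hrepet ⊢
  exact div_rpow_le_mul_div_rpow hα (by exact_mod_cast hpos)
    (by exact_mod_cast (show 0 < L by omega)) zero_le_two (Nat.cast_nonneg _)
    (by rw [one_mul]; exact_mod_cast hrepet)
    (by exact_mod_cast (show L ≤ 2 * period n (mseq a i + 1) by omega))

end Quotient

end SimpleToeplitz

open SimpleToeplitz in
theorem stmt17_general {A : Type*} [Finite A] (a : ℕ → A) (n : ℕ → ℕ) (hn : ∀ k, 2 ≤ n k)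
    (ha : ∀ k, a k ≠ a (k + 1)) (α : ℝ) (hα : 0 ≤ α) :
    (IsBoundedUnder (· ≤ ·) atTop (fun L : ℕ => (repet a n L : ℝ) / (L : ℝ) ^ α) ∧
      0 < limsup (fun L : ℕ => (repet a n L : ℝ) / (L : ℝ) ^ α) atTop) ↔
    (IsBoundedUnder (· ≤ ·) atTop
        (fun i : ℕ => (((ToeplitzBlock a n (Kf a (mseq a i) - 1)).length : ℝ) + 1) /
          (((ToeplitzBlock a n (mseq a i)).length : ℝ) + 1) ^ α) ∧
      0 < limsup (fun i : ℕ => (((ToeplitzBlock a n (Kf a (mseq a i) - 1)).length : ℝ) + 1) /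
          (((ToeplitzBlock a n (mseq a i)).length : ℝ) + 1) ^ α) atTop) := by
  have hlength (k : ℕ) : ((ToeplitzBlock a n k).length : ℝ) + 1 = period n (k + 1) :=
    mod_cast length_toeplitzBlock_add_one hn a k
  have hK (i : ℕ) : Kf a (mseq a i) - 1 + 1 = Kf a (mseq a i) :=
    Nat.sub_add_cancel (Nat.one_le_of_lt (lt_Kf a _))
  simp only [hlength, hK]
  exact (tailDominated_repet_period hn ha hα).isBoundedUnder_and_limsup_pos_iff
    (tailDominated_period_repet hn ha hα) (fun _ => by positivity) (fun _ => by positivity)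

/-- `0 < limsup R(L)/L^α < ∞` iff
`0 < limsup (|p (K (m i) - 1)| + 1)/(|p (m i)| + 1)^α < ∞`. -/
theorem stmt17 {A : Type*} [Fintype A] [Nonempty A]
    (a : ℕ → A) (n : ℕ → ℕ) (hn : ∀ k, 2 ≤ n k) (ha : ∀ k, a k ≠ a (k + 1))
    (hAev : 2 ≤ (Aev a).ncard)
    (α : ℝ) (hα : 1 ≤ α) :
    (Filter.IsBoundedUnder (· ≤ ·) Filter.atTop
        (fun L : ℕ => (repet a n L : ℝ) / (L : ℝ) ^ α) ∧
      0 < Filter.limsup (fun L : ℕ => (repet a n L : ℝ) / (L : ℝ) ^ α) Filter.atTop) ↔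
    (Filter.IsBoundedUnder (· ≤ ·) Filter.atTop
        (fun i : ℕ => (((ToeplitzBlock a n (Kf a (mseq a i) - 1)).length : ℝ) + 1) /
          (((ToeplitzBlock a n (mseq a i)).length : ℝ) + 1) ^ α) ∧
      0 < Filter.limsup
        (fun i : ℕ => (((ToeplitzBlock a n (Kf a (mseq a i) - 1)).length : ℝ) + 1) /
          (((ToeplitzBlock a n (mseq a i)).length : ℝ) + 1) ^ α) Filter.atTop) :=
  stmt17_general a n hn ha α (zero_le_one.trans hα)
end

section
/- The following are equivalent: (1) there exists a sequence k : ℕ → ℕ with k_r ≥ 1 for all r, k_r → ∞, and a constant C such that ∏_{j = k_r + 1}^{K(k_r − 1) − 1} n_j ≤ C for all r; (2) there exists a strictly increasing sequence of indices i : ℕ → ℕ with i_r ≥ 1 and a constant C such that ∏_{j = m_{i_r} + 1}^{K(m_{i_r} − 1) − 1} n_j ≤ C for all r. -/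
open Filter

/-!
Round `k` up to the next term `m (i + 1) ≥ k`, so that `m i ≤ k - 1`. As `K` does not exceed
`K (m i)` before position `m (i + 1)`, we get `K (m (i + 1) - 1) ≤ K (m i) ≤ K (k - 1)`. So the
interval of indices attached to `m (i + 1)` lies inside the one attached to `k`, and rounding up
does not increase the product, all of whose factors are at least `1`.
-/

/-- The sequence `m` lists the successive positions at which `K` exceeds its value at the previously
listed position. The first position `m 0` is left free. -/
def IsIncreaseSeq {α : Type*} [LT α] (K : ℕ → α) (m : ℕ → ℕ) : Prop :=
  ∀ i, IsLeast {j | m i < j ∧ K (m i) < K j} (m (i + 1))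

namespace IsIncreaseSeq

theorem strictMono {α : Type*} [LT α] {K : ℕ → α} {m : ℕ → ℕ} (hm : IsIncreaseSeq K m) :
    StrictMono m :=
  strictMono_nat_of_lt_succ fun i => (hm i).1.1

theorem apply_le_of_lt_succ {α : Type*} [LinearOrder α] {K : ℕ → α} {m : ℕ → ℕ}
    (hm : IsIncreaseSeq K m) {i j : ℕ} (hij : m i ≤ j) (hj : j < m (i + 1)) :
    K j ≤ K (m i) := by
  obtain rfl | hlt := hij.eq_or_lt
  · exact le_rfl
  · exact not_lt.1 fun hK => hj.not_ge ((hm i).2 ⟨hlt, hK⟩)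

variable {K m : ℕ → ℕ}

theorem Icc_succ_subset (hm : IsIncreaseSeq K m) (hK : Monotone K) {i k : ℕ}
    (hk : k ∈ Set.Ioc (m i) (m (i + 1))) :
    Finset.Icc (m (i + 1) + 1) (K (m (i + 1) - 1) - 1) ⊆ Finset.Icc (k + 1) (K (k - 1) - 1) := by
  obtain ⟨hik, hki⟩ := hk
  have hle : K (m (i + 1) - 1) ≤ K (k - 1) :=
    calc K (m (i + 1) - 1) ≤ K (m i) := hm.apply_le_of_lt_succ (by omega) (by omega)
      _ ≤ K (k - 1) := hK (Nat.le_sub_one_of_lt hik)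
  exact Finset.Icc_subset_Icc (Nat.succ_le_succ hki) (Nat.sub_le_sub_right hle 1)

theorem frequently_prod_le {M : Type*} [CommMonoid M] [PartialOrder M] [IsOrderedMonoid M]
    (hm : IsIncreaseSeq K m) (hK : Monotone K) {n : ℕ → M} (hn : ∀ j, 1 ≤ n j) {C : M}
    (hC : ∃ᶠ k in atTop, ∏ j ∈ Finset.Icc (k + 1) (K (k - 1) - 1), n j ≤ C) :
    ∃ᶠ i in atTop, ∏ j ∈ Finset.Icc (m i + 1) (K (m i - 1) - 1), n j ≤ C := by
  refine frequently_atTop.2 fun N => ?_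
  obtain ⟨k, hNk, hkC⟩ := frequently_atTop'.1 hC (m N)
  obtain ⟨i, hi, hk⟩ : ∃ i ∈ Set.Ico N k, k ∈ Set.Ioc (m i) (m (i + 1)) := by
    have hmem : k ∈ Set.Ioc (m N) (m k) := ⟨hNk, hm.strictMono.le_apply⟩
    rw [← hm.strictMono.monotone.biUnion_Ico_Ioc_map_succ] at hmem
    simpa only [Set.mem_iUnion, exists_prop, Nat.succ_eq_succ] using hmem
  refine ⟨i + 1, Nat.le_succ_of_le hi.1, le_trans ?_ hkC⟩
  exact Finset.prod_le_prod_of_subset_of_one_le' (hm.Icc_succ_subset hK hk) fun j _ _ => hn j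

end IsIncreaseSeq

theorem exists_image_Ici_subset_image_Icc {A : Type*} {a : ℕ → A} {k : ℕ}
    (ha : (a '' Set.Ici k).Finite) : ∃ j, k ≤ j ∧ a '' Set.Ici k ⊆ a '' Set.Icc k j := by
  obtain ⟨s, hs, hbij⟩ := Set.exists_subset_bijOn (Set.Ici k) a
  obtain ⟨b, hb⟩ := (hbij.finite_iff_finite.2 ha).bddAbove
  refine ⟨max k b, le_max_left k b, ?_⟩
  rw [← hbij.image_eq]
  exact Set.image_mono fun i hi => ⟨hs hi, (hb hi).trans (le_max_right k b)⟩

section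

variable {A : Type*} [Finite A] (a : ℕ → A)

theorem isLeast_Kf (k : ℕ) :
    IsLeast {j | k < j ∧ Ak a (k + 1) ⊆ a '' Set.Icc (k + 1) j} (Kf a k) := by
  have hKf : Kf a k = sInf {j | k < j ∧ Ak a (k + 1) ⊆ a '' Set.Icc (k + 1) j} := by
    have hwindow (j : ℕ) :
        {x | ∃ i, k + 1 ≤ i ∧ i ≤ j ∧ a i = x} = a '' Set.Icc (k + 1) j := by
      simp only [Set.image, Set.mem_Icc, and_assoc]
    have hsub (j : ℕ) : a '' Set.Icc (k + 1) j ⊆ Ak a (k + 1) :=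
      Set.image_mono Set.Icc_subset_Ici_self
    simp only [Kf, hwindow, Set.Subset.antisymm_iff, hsub, true_and]
  rw [hKf]
  exact isLeast_csInf (exists_image_Ici_subset_image_Icc (Set.toFinite _))

theorem lt_Kf (k : ℕ) : k < Kf a k :=
  (isLeast_Kf a k).1.1

theorem monotone_Kf : Monotone (Kf a) := by
  intro k l hkl
  obtain ⟨hl, hsub⟩ := (isLeast_Kf a l).1
  refine (isLeast_Kf a k).2 ⟨hkl.trans_lt hl, ?_⟩
  rintro _ ⟨i, hi, rfl⟩
  obtain hiK | hKi := le_or_gt i (Kf a l)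
  · exact ⟨i, ⟨hi, hiK⟩, rfl⟩
  · have hmem : a i ∈ Ak a (l + 1) := ⟨i, hl.trans hKi, rfl⟩
    exact Set.image_mono (Set.Icc_subset_Icc_left (Nat.succ_le_succ hkl)) (hsub hmem)

theorem isIncreaseSeq_mseq : IsIncreaseSeq (Kf a) (mseq a) := fun i =>
  isLeast_csInf ⟨Kf a (mseq a i), lt_Kf a _, lt_Kf a _⟩

end

theorem stmt19_general {M : Type*} [CommMonoid M] [PartialOrder M] [IsOrderedMonoid M]
    {K m : ℕ → ℕ} (hK : Monotone K) (hm : IsIncreaseSeq K m) {n : ℕ → M} (hn : ∀ j, 1 ≤ n j) :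
    (∃ (k : ℕ → ℕ) (C : M), (∀ r, 1 ≤ k r) ∧ Tendsto k atTop atTop ∧
        ∀ r, ∏ j ∈ Finset.Icc (k r + 1) (K (k r - 1) - 1), n j ≤ C) ↔
    (∃ (i : ℕ → ℕ) (C : M), StrictMono i ∧ (∀ r, 1 ≤ i r) ∧
        ∀ r, ∏ j ∈ Finset.Icc (m (i r) + 1) (K (m (i r) - 1) - 1), n j ≤ C) := by
  constructor
  · rintro ⟨k, C, -, hk, hC⟩
    have hfreq := hm.frequently_prod_le hK hn (hk.frequently (Frequently.of_forall hC))
    obtain ⟨i, hi, hiC⟩ :=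
      extraction_of_frequently_atTop (hfreq.and_eventually (eventually_ge_atTop 1))
    exact ⟨i, C, hi, fun r => (hiC r).2, fun r => (hiC r).1⟩
  · rintro ⟨i, C, hi, hi_pos, hC⟩
    exact ⟨m ∘ i, C, fun r => (hi_pos r).trans hm.strictMono.le_apply,
      (hm.strictMono.comp hi).tendsto_atTop, hC⟩

/-- there is a sequence `k r → ∞` with bounded products
`∏_{j = k r + 1}^{K (k r - 1) - 1} n j` iff there is a subsequence `(m (i r))` of
`(m i)` with bounded products `∏_{j = m (i r) + 1}^{K (m (i r) - 1) - 1} n j`. -/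
theorem stmt19 {A : Type*} [Fintype A] [Nonempty A]
    (a : ℕ → A) (n : ℕ → ℕ) (hn : ∀ k, 2 ≤ n k) (ha : ∀ k, a k ≠ a (k + 1))
    (hAev : 2 ≤ (Aev a).ncard) :
    (∃ (k : ℕ → ℕ) (C : ℕ), (∀ r, 1 ≤ k r) ∧
        Filter.Tendsto k Filter.atTop Filter.atTop ∧
        ∀ r, ∏ j ∈ Finset.Icc (k r + 1) (Kf a (k r - 1) - 1), n j ≤ C) ↔
    (∃ (i : ℕ → ℕ) (C : ℕ), StrictMono i ∧ (∀ r, 1 ≤ i r) ∧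
        ∀ r, ∏ j ∈ Finset.Icc (mseq a (i r) + 1) (Kf a (mseq a (i r) - 1) - 1), n j ≤ C) :=
  stmt19_general (monotone_Kf a) (isIncreaseSeq_mseq a) fun k => one_le_two.trans (hn k)
end
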